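/- arXiv:1306.5880 — 7 statements merged into one kernel-verified Lean document; each statement's English description precedes it below -/
import Mathlib

section
/- Let p, q > 2 be real numbers and set α = 1/p, β = 1/q. Define four affine maps on (0,∞) × ℝ by T₀(s,t) = (p·s, p·t), T₁(s,t) = (p·s, p·t − p + 1), T′₀(s,t) = (s/q, t), T′₁(s,t) = (s/q, t + ((q−1)/q)·s). Then for every s > 0 and t ∈ ℝ, t ∈ C_α − s·C_β if and only if there exists a sequence (sₙ, tₙ)_{n≥0} in (0,∞) × ℝ with (s₀, t₀) = (s, t) such that for every n, (s_{n+1}, t_{n+1}) is the image of (sₙ, tₙ) under one of the four maps T₀, T₁, T′₀, T′₁, and the sequence lies in a compact subset of (0,∞) × ℝ (i.e., there are constants 0 < c ≤ C and M ≥ 0 with c ≤ sₙ ≤ C and |tₙ| ≤ M for all n). -/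
/-!
Renormalization. A point of `C_a` is `x = (1 - a) ε + a x'` with `ε ∈ {0, 1}` and `x' ∈ C_a`.
Substituting this for `x` (resp. `y`) in `t = x - s y` turns `t ∈ C_α - s C_β` into
`t' ∈ C_α - s' C_β`, where `(s', t')` is the image of `(s, t)` under one of `T₀, T₁`
(resp. `T'₀, T'₁`).

Given `t ∈ C_α - s C_β`, one expands `x` when `s < 1` and `y` when `1 ≤ s`. This keeps `s` between
`min s (1/q)` and `max s p` (`exists_step`), and `|t| ≤ 1 + s` on the difference set, so the orbit
stays in a compact set.

Conversely, the maps pull points of the difference set at `(sₙ, tₙ)` back to points of the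
difference set at `(s, t)`, and after `a` expansions of `x` distances have shrunk by `p ^ a`
(`pull_back`). Pulling back the point `0` gives points of the difference set within `M / p ^ a` of
`t`. Since `sₙ = s p ^ a / q ^ b` with `a + b = n` is bounded below, `a` is unbounded. Hence `t` is
in the closure of the difference set, which is compact.
-/

open Set

/-- The middle Cantor set `C_a`, for `0 < a < 1/2`:
`C_a = { (1-a) * ∑ εₖ aᵏ : εₖ ∈ {0,1} }`. -/
noncomputable def middleCantor (a : ℝ) : Set ℝ :=
  {x : ℝ | ∃ ε : ℕ → Bool, x = (1 - a) * ∑' k : ℕ, (if ε k then a ^ k else 0)}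

/-- The arithmetic difference `C_a - l · C_b`. -/
noncomputable def diffSet (a b l : ℝ) : Set ℝ :=
  {z : ℝ | ∃ x ∈ middleCantor a, ∃ y ∈ middleCantor b, z = x - l * y}

lemma summable_digits {a : ℝ} (h0 : 0 ≤ a) (h1 : a < 1) (ε : ℕ → Bool) :
    Summable (fun k : ℕ => if ε k then a ^ k else 0) := by
  refine Summable.of_nonneg_of_le (fun k => ?_) (fun k => ?_) (summable_geometric_of_lt_one h0 h1)
  · split_ifs <;> positivity
  · split_ifs
    · exact le_rfl
    · positivity

lemma middleCantor_subset {a x : ℝ} (h0 : 0 ≤ a) (h1 : a < 1) (hx : x ∈ middleCantor a) :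
    0 ≤ x ∧ x ≤ 1 := by
  obtain ⟨ε, rfl⟩ := hx
  have ha : 0 < 1 - a := by linarith
  constructor
  · refine mul_nonneg ha.le (tsum_nonneg fun k => ?_)
    split_ifs <;> positivity
  · have h : ∑' k : ℕ, (if ε k then a ^ k else 0) ≤ ∑' k : ℕ, a ^ k := by
      refine (summable_digits h0 h1 ε).tsum_le_tsum (fun k => ?_)
        (summable_geometric_of_lt_one h0 h1)
      split_ifs
      · exact le_rfl
      · positivity
    rw [tsum_geometric_of_lt_one h0 h1] at h
    calc _ ≤ (1 - a) * (1 - a)⁻¹ := mul_le_mul_of_nonneg_left h ha.le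
      _ = 1 := mul_inv_cancel₀ ha.ne'

lemma zero_mem_middleCantor (a : ℝ) : (0 : ℝ) ∈ middleCantor a :=
  ⟨fun _ => false, by simp⟩

/-- The self-similarity `C_a ⊆ a C_a ∪ (a C_a + (1 - a))`. -/
lemma middleCantor_split {a x : ℝ} (h0 : 0 ≤ a) (h1 : a < 1) (hx : x ∈ middleCantor a) :
    ∃ x' ∈ middleCantor a, x = a * x' ∨ x = (1 - a) + a * x' := by
  obtain ⟨ε, rfl⟩ := hx
  refine ⟨_, ⟨fun k => ε (k + 1), rfl⟩, ?_⟩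
  rw [(summable_digits h0 h1 ε).tsum_eq_zero_add]
  have h : ∀ k : ℕ, (if ε (k + 1) then a ^ (k + 1) else 0)
      = a * (if ε (k + 1) then a ^ k else 0) := by
    intro k
    split_ifs <;> ring
  simp only [h, tsum_mul_left]
  cases ε 0
  · left
    simp
    ring
  · right
    simp
    ring

/-- The self-similarity `a C_a ∪ (a C_a + (1 - a)) ⊆ C_a`. -/
lemma middleCantor_join {a x : ℝ} (h0 : 0 ≤ a) (h1 : a < 1) (hx : x ∈ middleCantor a) :
    a * x ∈ middleCantor a ∧ (1 - a) + a * x ∈ middleCantor a := by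
  obtain ⟨ε, rfl⟩ := hx
  have key : ∀ d : Bool, (1 - a) * (if d then 1 else 0)
      + a * ((1 - a) * ∑' k : ℕ, (if ε k then a ^ k else 0)) ∈ middleCantor a := by
    intro d
    refine ⟨fun k => Nat.casesOn k d ε, ?_⟩
    rw [(summable_digits h0 h1 (fun k => Nat.casesOn k d ε)).tsum_eq_zero_add]
    change _ = (1 - a) * ((if d then a ^ 0 else 0) + ∑' k : ℕ, (if ε k then a ^ (k + 1) else 0))
    have h : ∀ k : ℕ, (if ε k then a ^ (k + 1) else 0) = a * (if ε k then a ^ k else 0) := by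
      intro k
      split_ifs <;> ring
    simp only [h, tsum_mul_left, pow_zero]
    ring
  exact ⟨by simpa using key false, by simpa using key true⟩

/-- `C_a` is a continuous image of the compact space `ℕ → Bool`. -/
lemma isCompact_middleCantor {a : ℝ} (h0 : 0 ≤ a) (h1 : a < 1) : IsCompact (middleCantor a) := by
  have hc : Continuous (fun ε : ℕ → Bool => (1 - a) * ∑' k : ℕ, (if ε k then a ^ k else 0)) := by
    refine continuous_const.mul
      (continuous_tsum (fun k => ?_) (summable_geometric_of_lt_one h0 h1) (fun k ε => ?_))
    · exact (continuous_of_discreteTopology (f := fun d : Bool => if d then a ^ k else 0)).comp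
        (continuous_apply k)
    · split_ifs
      · rw [Real.norm_of_nonneg (by positivity)]
      · simpa using pow_nonneg h0 k
  have he : middleCantor a
      = range (fun ε : ℕ → Bool => (1 - a) * ∑' k : ℕ, (if ε k then a ^ k else 0)) := by
    ext x
    exact ⟨fun ⟨ε, h⟩ => ⟨ε, h.symm⟩, fun ⟨ε, h⟩ => ⟨ε, h.symm⟩⟩
  rw [he]
  exact isCompact_range hc

lemma isCompact_diffSet {a b : ℝ} (ha0 : 0 ≤ a) (ha1 : a < 1) (hb0 : 0 ≤ b) (hb1 : b < 1) (l : ℝ) :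
    IsCompact (diffSet a b l) := by
  have he : diffSet a b l
      = (fun z : ℝ × ℝ => z.1 - l * z.2) '' (middleCantor a ×ˢ middleCantor b) := by
    ext z
    constructor
    · rintro ⟨x, hx, y, hy, rfl⟩
      exact ⟨(x, y), ⟨hx, hy⟩, rfl⟩
    · rintro ⟨⟨x, y⟩, ⟨hx, hy⟩, rfl⟩
      exact ⟨x, hx, y, hy, rfl⟩
  rw [he]
  exact ((isCompact_middleCantor ha0 ha1).prod (isCompact_middleCantor hb0 hb1)).image
    (by fun_prop)

/-- `w` is the image of `z` under one of the four maps `T₀, T₁, T'₀, T'₁`. -/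
def IsStep (p q : ℝ) (z w : ℝ × ℝ) : Prop :=
  w = (p * z.1, p * z.2) ∨
  w = (p * z.1, p * z.2 - p + 1) ∨
  w = (z.1 / q, z.2) ∨
  w = (z.1 / q, z.2 + ((q - 1) / q) * z.1)

/-- The renormalization step: expand `x` if `s < 1` and `y` if `1 ≤ s`. The bounds `c ≤ 1/q` and
`p ≤ C` make the band `[c, C]` invariant. -/
lemma exists_step {p q c C : ℝ} (hp : 2 < p) (hq : 2 < q) (hc0 : 0 < c) (hc : c ≤ 1 / q)
    (hC : p ≤ C) (z : ℝ × ℝ)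
    (hz : c ≤ z.1 ∧ z.1 ≤ C ∧ z.2 ∈ diffSet (1 / p) (1 / q) z.1) :
    ∃ w : ℝ × ℝ, (c ≤ w.1 ∧ w.1 ≤ C ∧ w.2 ∈ diffSet (1 / p) (1 / q) w.1) ∧ IsStep p q z w := by
  obtain ⟨s, t⟩ := z
  dsimp only at hz
  obtain ⟨h1, h2, x, hx, y, hy, rfl⟩ := hz
  have hp0 : 0 < p := by linarith
  have hq0 : 0 < q := by linarith
  have hp1 : 1 / p < 1 := by rw [div_lt_one hp0]; linarith
  have hq1 : 1 / q < 1 := by rw [div_lt_one hq0]; linarith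
  rcases lt_or_ge s 1 with hs | hs
  · obtain ⟨x', hx', h⟩ := middleCantor_split (by positivity) hp1 hx
    refine ⟨(p * s, x' - (p * s) * y), ⟨?_, ?_, x', hx', y, hy, rfl⟩, ?_⟩
    · dsimp only; nlinarith
    · dsimp only; nlinarith
    · rcases h with rfl | rfl
      · left
        ext
        · rfl
        · simp only; field_simp
      · right; left
        ext
        · rfl
        · simp only; field_simp; ring
  · obtain ⟨y', hy', h⟩ := middleCantor_split (by positivity) hq1 hy
    refine ⟨(s / q, x - (s / q) * y'), ⟨?_, ?_, x, hx, y', hy', rfl⟩, ?_⟩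
    · exact hc.trans (by dsimp only; gcongr)
    · refine (div_le_self (by linarith) (by linarith)).trans h2
    · rcases h with rfl | rfl
      · right; right; left
        ext
        · rfl
        · simp only; field_simp
      · right; right; right
        ext
        · rfl
        · simp only; field_simp; ring

/-- Pulling points of the difference sets back along the first `n` steps of an orbit. Here `a` and
`b` count the steps of type `T` and `T'`; only the former contract distances. -/
lemma pull_back {p q : ℝ} (hp : 2 < p) (hq : 2 < q) (z : ℕ → ℝ × ℝ)
    (hz : ∀ n, IsStep p q (z n) (z (n + 1))) (n : ℕ) :
    ∃ a b : ℕ, a + b = n ∧ (z n).1 * q ^ b = (z 0).1 * p ^ a ∧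
      ∀ u ∈ diffSet (1 / p) (1 / q) (z n).1, ∃ v ∈ diffSet (1 / p) (1 / q) (z 0).1,
        (z 0).2 - v = ((z n).2 - u) / p ^ a := by
  have hp0 : 0 < p := by linarith
  have hq0 : 0 < q := by linarith
  have hp1 : 1 / p < 1 := by rw [div_lt_one hp0]; linarith
  have hq1 : 1 / q < 1 := by rw [div_lt_one hq0]; linarith
  induction n with
  | zero => exact ⟨0, 0, rfl, by simp, fun u hu => ⟨u, hu, by simp⟩⟩
  | succ n ih =>
    obtain ⟨a, b, hab, hs, H⟩ := ih
    rcases hz n with h | h | h | h <;> rw [h]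
    · refine ⟨a + 1, b, by omega, by simp only; linear_combination p * hs, ?_⟩
      rintro u ⟨x, hx, y, hy, rfl⟩
      obtain ⟨v, hv, e⟩ := H _
        ⟨_, (middleCantor_join (by positivity) hp1 hx).1, y, hy, rfl⟩
      refine ⟨v, hv, ?_⟩
      rw [e]
      simp only
      field_simp
      ring
    · refine ⟨a + 1, b, by omega, by simp only; linear_combination p * hs, ?_⟩
      rintro u ⟨x, hx, y, hy, rfl⟩
      obtain ⟨v, hv, e⟩ := H _
        ⟨_, (middleCantor_join (by positivity) hp1 hx).2, y, hy, rfl⟩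
      refine ⟨v, hv, ?_⟩
      rw [e]
      simp only
      field_simp
      ring
    · refine ⟨a, b + 1, by omega, by rw [← hs]; simp only; field_simp; ring, ?_⟩
      rintro u ⟨x, hx, y, hy, rfl⟩
      obtain ⟨v, hv, e⟩ := H _
        ⟨x, hx, _, (middleCantor_join (by positivity) hq1 hy).1, rfl⟩
      refine ⟨v, hv, ?_⟩
      rw [e]
      simp only
      field_simp
    · refine ⟨a, b + 1, by omega, by rw [← hs]; simp only; field_simp; ring, ?_⟩
      rintro u ⟨x, hx, y, hy, rfl⟩
      obtain ⟨v, hv, e⟩ := H _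
        ⟨x, hx, _, (middleCantor_join (by positivity) hq1 hy).2, rfl⟩
      refine ⟨v, hv, ?_⟩
      rw [e]
      simp only
      field_simp
      ring

theorem stmt0 (p q : ℝ) (hp : 2 < p) (hq : 2 < q) (s t : ℝ) (hs : 0 < s) :
    t ∈ diffSet (1 / p) (1 / q) s ↔
      ∃ z : ℕ → ℝ × ℝ,
        z 0 = (s, t) ∧
        (∀ n : ℕ,
          z (n + 1) = (p * (z n).1, p * (z n).2) ∨
          z (n + 1) = (p * (z n).1, p * (z n).2 - p + 1) ∨
          z (n + 1) = ((z n).1 / q, (z n).2) ∨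
          z (n + 1) = ((z n).1 / q, (z n).2 + ((q - 1) / q) * (z n).1)) ∧
        ∃ c C M : ℝ, 0 < c ∧ c ≤ C ∧ 0 ≤ M ∧
          ∀ n : ℕ, c ≤ (z n).1 ∧ (z n).1 ≤ C ∧ |(z n).2| ≤ M := by
  have hp0 : 0 < p := by linarith
  have hq0 : 0 < q := by linarith
  have hp1 : 1 / p < 1 := by rw [div_lt_one hp0]; linarith
  have hq1 : 1 / q < 1 := by rw [div_lt_one hq0]; linarith
  have hp0' : 0 ≤ 1 / p := by positivity
  have hq0' : 0 ≤ 1 / q := by positivity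
  constructor
  · intro ht
    have hc0 : 0 < min s (1 / q) := lt_min hs (by positivity)
    have hstep := exists_step (c := min s (1 / q)) (C := max s p) hp hq hc0
      (min_le_right _ _) (le_max_right _ _)
    choose! f hf using hstep
    have hinv : ∀ n : ℕ, min s (1 / q) ≤ (f^[n] (s, t)).1 ∧ (f^[n] (s, t)).1 ≤ max s p ∧
        (f^[n] (s, t)).2 ∈ diffSet (1 / p) (1 / q) (f^[n] (s, t)).1 := by
      intro n
      induction n with
      | zero => exact ⟨min_le_left _ _, le_max_left _ _, ht⟩
      | succ n ih =>
        rw [Function.iterate_succ_apply']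
        exact (hf _ ih).1
    refine ⟨fun n => f^[n] (s, t), rfl, fun n => ?_, min s (1 / q), max s p, 1 + max s p, hc0,
      (min_le_left _ _).trans (le_max_left _ _), by positivity, fun n => ?_⟩
    · simp only [Function.iterate_succ_apply']
      exact (hf _ (hinv n)).2
    · obtain ⟨h1, h2, x, hx, y, hy, e⟩ := hinv n
      refine ⟨h1, h2, ?_⟩
      simp only
      obtain ⟨hx0, hx1⟩ := middleCantor_subset hp0' hp1 hx
      obtain ⟨hy0, hy1⟩ := middleCantor_subset hq0' hq1 hy
      have hS : 0 ≤ (f^[n] (s, t)).1 := hc0.le.trans h1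
      rw [e, abs_le]
      constructor <;> nlinarith [mul_nonneg hS hy0, mul_le_mul_of_nonneg_left hy1 hS]
  · rintro ⟨z, hz0, hz, c, C, M, hc, -, hM, hb⟩
    rw [← (isCompact_diffSet hp0' hp1 hq0' hq1 s).isClosed.closure_eq, Metric.mem_closure_iff]
    intro r hr
    obtain ⟨K, hK⟩ := pow_unbounded_of_one_lt (M / r) (show 1 < p by linarith)
    obtain ⟨N, hN⟩ := pow_unbounded_of_one_lt (s * p ^ K / c) (show 1 < q by linarith)
    obtain ⟨a, b, hab, e, H⟩ := pull_back hp hq z hz (N + K)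
    obtain ⟨v, hv, hd⟩ := H 0
      ⟨0, zero_mem_middleCantor _, 0, zero_mem_middleCantor _, by simp⟩
    obtain ⟨h1, -, h3⟩ := hb (N + K)
    rw [hz0] at e hv hd
    simp only at e hv hd
    -- With fewer than `K` steps of type `T`, the first coordinate would fall below `c`.
    have haK : K ≤ a := by
      by_contra! hlt
      have hNb : q ^ N ≤ q ^ b := pow_le_pow_right₀ (by linarith) (by omega)
      have haK' : p ^ a ≤ p ^ K := pow_le_pow_right₀ (by linarith) hlt.le
      rw [div_lt_iff₀ hc] at hN
      have i1 : c * q ^ b ≤ (z (N + K)).1 * q ^ b := by gcongr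
      have i2 : s * p ^ a ≤ s * p ^ K := by gcongr
      have i3 : c * q ^ N ≤ c * q ^ b := by gcongr
      linarith
    have hpa : p ^ K ≤ p ^ a := pow_le_pow_right₀ (by linarith) haK
    refine ⟨v, hv, ?_⟩
    have hpos : 0 < p ^ a := by positivity
    rw [Real.dist_eq, hd, sub_zero, abs_div, abs_of_pos hpos, div_lt_iff₀ hpos]
    rw [div_lt_iff₀ hr] at hK
    have i4 : p ^ K * r ≤ p ^ a * r := by gcongr
    linarith
end

section
/- Let p, q > 2 be real numbers with log p / log q = n₀/m₀ where n₀, m₀ are coprime positive integers, and set α = 1/p, β = 1/q. Let λ₁, λ₂ be nonzero real numbers such that λ₁ = (p^i / q^j)·λ₂ for some nonnegative integers i, j. Then the Hausdorff dimension of C_α − λ₁·C_β equals the Hausdorff dimension of C_α − λ₂·C_β; moreover, C_α − λ₁·C_β has Lebesgue measure zero if and only if C_α − λ₂·C_β has Lebesgue measure zero. -/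
/-!
Write `D l = C_a - l C_b`. The self-similarity `C_a = a C_a ∪ (a C_a + (1 - a))` makes `D l` the
union of two affine copies (of ratio `a`) of `D (l / a)`, and the self-similarity of `C_b` makes
`D l` the union of two translates of `D (l b)`. Nonconstant affine maps and finite unions preserve
both the Hausdorff dimension and nullity, so both are unchanged when `l` is multiplied by
`p = 1 / a` or divided by `q = 1 / b`; iterating gives the claim.
-/

open Set MeasureTheory

/-- Equality of Hausdorff dimensions together with equivalence of being Lebesgue null. -/
def SameSize (S T : Set ℝ) : Prop :=
  dimH S = dimH T ∧ (volume S = 0 ↔ volume T = 0)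

lemma SameSize.trans {S T U : Set ℝ} (h : SameSize S T) (h' : SameSize T U) : SameSize S U :=
  ⟨h.1.trans h'.1, h.2.trans h'.2⟩

lemma dimH_affine_image_le (c t : ℝ) (S : Set ℝ) :
    dimH ((fun x => c * x + t) '' S) ≤ dimH S := by
  have h : LipschitzWith ‖c‖₊ (fun x : ℝ => c * x + t) := by
    refine LipschitzWith.of_dist_le_mul fun x y => ?_
    simp only [Real.dist_eq, coe_nnnorm, Real.norm_eq_abs]
    rw [← abs_mul]
    apply le_of_eq
    congr 1
    ring
  exact h.dimH_image_le S

lemma volume_affine_image_eq_zero (c t : ℝ) {S : Set ℝ} (hS : volume S = 0) :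
    volume ((fun x => c * x + t) '' S) = 0 :=
  addHaar_image_eq_zero_of_differentiableOn_of_addHaar_eq_zero volume
    (fun x _ => by fun_prop) hS

/-- A union of two affine copies of `T` has the same size as `T`. -/
lemma sameSize_of_eq_union {S T : Set ℝ} {c t s : ℝ} (hc : c ≠ 0)
    (h : S = (fun x => c * x + t) '' T ∪ (fun x => c * x + s) '' T) : SameSize S T := by
  have hT : T ⊆ (fun x => c⁻¹ * x + -(c⁻¹ * t)) '' S := by
    intro x hx
    refine ⟨c * x + t, ?_, ?_⟩
    · rw [h]
      exact Or.inl ⟨x, hx, rfl⟩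
    · field_simp
      ring
  refine ⟨le_antisymm ?_ ((dimH_mono hT).trans (dimH_affine_image_le _ _ _)), fun hS => ?_,
    fun hT0 => ?_⟩
  · rw [h, dimH_union]
    exact max_le (dimH_affine_image_le _ _ _) (dimH_affine_image_le _ _ _)
  · exact measure_mono_null hT (volume_affine_image_eq_zero _ _ hS)
  · rw [h]
    exact measure_union_null (volume_affine_image_eq_zero _ _ hT0)
      (volume_affine_image_eq_zero _ _ hT0)

lemma cantorSeries_succ {a : ℝ} (h0 : 0 < a) (h1 : a < 1) (ε : ℕ → Bool) :
    ∑' k : ℕ, (if ε k then a ^ k else 0)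
      = (if ε 0 then 1 else 0) + a * ∑' k : ℕ, (if ε (k + 1) then a ^ k else 0) := by
  have hs : Summable fun k : ℕ => (if ε k then a ^ k else 0) := by
    refine Summable.of_nonneg_of_le (fun k => ?_) (fun k => ?_)
      (summable_geometric_of_lt_one h0.le h1)
    · split_ifs <;> positivity
    · split_ifs
      · exact le_rfl
      · positivity
  rw [hs.tsum_eq_zero_add, ← tsum_mul_left]
  refine congrArg₂ (· + ·) (by simp) (tsum_congr fun k => ?_)
  split_ifs <;> ring

lemma mem_middleCantor_iff {a : ℝ} (h0 : 0 < a) (h1 : a < 1) (x : ℝ) :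
    x ∈ middleCantor a ↔ ∃ y ∈ middleCantor a, x = a * y ∨ x = a * y + (1 - a) := by
  constructor
  · rintro ⟨ε, rfl⟩
    refine ⟨_, ⟨fun k => ε (k + 1), rfl⟩, ?_⟩
    rw [cantorSeries_succ h0 h1]
    by_cases h : ε 0
    · right
      simp only [h, if_true]
      ring
    · left
      simp only [h]
      simp only [Bool.false_eq_true, if_false]
      ring
  · rintro ⟨_, ⟨ε, rfl⟩, rfl | rfl⟩
    · refine ⟨fun k => Nat.casesOn k false ε, ?_⟩
      rw [cantorSeries_succ h0 h1 (fun k => Nat.casesOn k false ε)]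
      simp only [Nat.rec_zero, Bool.false_eq_true, if_false]
      ring
    · refine ⟨fun k => Nat.casesOn k true ε, ?_⟩
      rw [cantorSeries_succ h0 h1 (fun k => Nat.casesOn k true ε)]
      simp only [Nat.rec_zero, if_true]
      ring

/-- Splitting `C_a`: the difference set for `l` is two copies, of ratio `a`, of that for `l / a`. -/
lemma sameSize_diffSet_div {a : ℝ} (h0 : 0 < a) (h1 : a < 1) (b l : ℝ) :
    SameSize (diffSet a b l) (diffSet a b (l / a)) := by
  refine sameSize_of_eq_union (c := a) (t := 0) (s := 1 - a) h0.ne' ?_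
  ext z
  constructor
  · rintro ⟨x, hx, y, hy, rfl⟩
    obtain ⟨w, hw, rfl | rfl⟩ := (mem_middleCantor_iff h0 h1 x).1 hx
    · exact Or.inl ⟨_, ⟨w, hw, y, hy, rfl⟩, by field_simp; ring⟩
    · exact Or.inr ⟨_, ⟨w, hw, y, hy, rfl⟩, by field_simp; ring⟩
  · rintro (⟨_, ⟨w, hw, y, hy, rfl⟩, rfl⟩ | ⟨_, ⟨w, hw, y, hy, rfl⟩, rfl⟩)
    · exact ⟨_, (mem_middleCantor_iff h0 h1 _).2 ⟨w, hw, Or.inl rfl⟩, y, hy, by field_simp; ring⟩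
    · exact ⟨_, (mem_middleCantor_iff h0 h1 _).2 ⟨w, hw, Or.inr rfl⟩, y, hy, by field_simp; ring⟩

/-- Splitting `C_b`: the difference set for `l` is two translates of that for `l * b`. -/
lemma sameSize_diffSet_mul {b : ℝ} (h0 : 0 < b) (h1 : b < 1) (a l : ℝ) :
    SameSize (diffSet a b l) (diffSet a b (l * b)) := by
  refine sameSize_of_eq_union (c := 1) (t := 0) (s := -(l * (1 - b))) one_ne_zero ?_
  ext z
  constructor
  · rintro ⟨x, hx, y, hy, rfl⟩
    obtain ⟨w, hw, rfl | rfl⟩ := (mem_middleCantor_iff h0 h1 y).1 hy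
    · exact Or.inl ⟨_, ⟨x, hx, w, hw, rfl⟩, by ring⟩
    · exact Or.inr ⟨_, ⟨x, hx, w, hw, rfl⟩, by ring⟩
  · rintro (⟨_, ⟨x, hx, w, hw, rfl⟩, rfl⟩ | ⟨_, ⟨x, hx, w, hw, rfl⟩, rfl⟩)
    · exact ⟨x, hx, _, (mem_middleCantor_iff h0 h1 _).2 ⟨w, hw, Or.inl rfl⟩, by ring⟩
    · exact ⟨x, hx, _, (mem_middleCantor_iff h0 h1 _).2 ⟨w, hw, Or.inr rfl⟩, by ring⟩

lemma sameSize_diffSet_pow {p q : ℝ} (hp : 1 < p) (hq : 1 < q) (l : ℝ) (i j : ℕ) :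
    SameSize (diffSet (1 / p) (1 / q) l) (diffSet (1 / p) (1 / q) (p ^ i / q ^ j * l)) := by
  have hp0 : 0 < p := one_pos.trans hp
  have hq0 : 0 < q := one_pos.trans hq
  induction i with
  | zero =>
    induction j with
    | zero => simp [SameSize]
    | succ j ih =>
      convert ih.trans (sameSize_diffSet_mul (b := 1 / q) (by positivity)
        ((div_lt_one hq0).2 hq) (1 / p) _) using 2
      field_simp
      ring
  | succ i ih =>
    convert ih.trans (sameSize_diffSet_div (a := 1 / p) (by positivity)
      ((div_lt_one hp0).2 hp) (1 / q) _) using 2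
    field_simp
    ring

theorem stmt3 (p q : ℝ) (hp : 2 < p) (hq : 2 < q) (n₀ m₀ : ℕ)
    (hn₀ : 0 < n₀) (hm₀ : 0 < m₀) (hcop : Nat.Coprime n₀ m₀)
    (hratio : Real.log p / Real.log q = (n₀ : ℝ) / (m₀ : ℝ))
    (l₁ l₂ : ℝ) (hl₁ : l₁ ≠ 0) (hl₂ : l₂ ≠ 0)
    (i j : ℕ) (hrel : l₁ = (p ^ i / q ^ j) * l₂) :
    dimH (diffSet (1 / p) (1 / q) l₁) = dimH (diffSet (1 / p) (1 / q) l₂) ∧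
      (volume (diffSet (1 / p) (1 / q) l₁) = 0 ↔ volume (diffSet (1 / p) (1 / q) l₂) = 0) := by
  subst hrel
  have h := sameSize_diffSet_pow (one_lt_two.trans hp) (one_lt_two.trans hq) l₂ i j
  exact ⟨h.1.symm, h.2.symm⟩
end

section
/- Let a, b > 0 and p₀, p₁, q₀, q₁ > 1 with 1/p₀ + 1/p₁ < 1 and 1/q₀ + 1/q₁ < 1, and let K be the affine Cantor set with two branches and convex hull [0,a] determined by (p₀, p₁), and K′ the one with convex hull [0,b] determined by (q₀, q₁). Define the transferred renormalization operators on (0,∞) × ℝ by T₀(s,t) = (p₀·s, p₀·t), T₁(s,t) = (p₁·s, p₁·t + a(1 − p₁)), T′₀(s,t) = (s/q₀, t), T′₁(s,t) = (s/q₁, t + b·((q₁ − 1)/q₁)·s). If τ(K)·τ(K′) > 1, then there exists a nonempty compact set R ⊆ (0,∞) × ℝ which is recurrent: for every point z ∈ R there is a finite composition of operators from {T₀, T₁, T′₀, T′₁} that maps z into the interior of R. -/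
/-!
Write `α₀, α₁, β₀, β₁` for the contraction ratios `1/p₀, 1/p₁, 1/q₀, 1/q₁`, let
`γ = 1 - α₀ - α₁` and `γ' = 1 - β₀ - β₁` be the relative gap lengths, and `m = min α₀ α₁`,
`m' = min β₀ β₁`. A point `(s, t)` encodes the pair of intervals `I = [0, a]` and
`J = [t, t + b s]`, whose length ratio is `r = b s / a`. The operators `T₀, T₁` replace `I` by one
of its two children (and rescale it to `[0, a]`), while `T'₀, T'₁` replace `J` by one of its
children.

If `I` and `J` meet, then `J` still meets a child of `I` as soon as `r > γ`, and `I` still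
meets a child of `J` as soon as `r < 1/γ'`. The hypothesis on thicknesses says `γ γ' < m m'`,
so there is a threshold `θ` with `γ / m' < θ < m / γ'`, and then `r₁, r₂` with
`γ < r₁ < θ m'` and `θ / m < r₂ < 1 / γ'`. Subdividing `J` when `r ≥ θ` and `I` when `r ≤ θ`
moves every `r ∈ [r₁, r₂]` into the open interval `(r₁, r₂)`.

To land in the interior in the `t` direction too, `R` asks that each of `I` and `J` starts
at least `ε (|I| + |J|)` before the other one ends. Subdividing either interval strictly
relaxes this requirement at the end where the overlap is inherited, and for small `ε` the gap
argument above survives the perturbation.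
Hence a single operator always suffices. The constants are produced by `exists_constants`, and the
two subdivision steps are `subdivide_left` (for `I`) and `subdivide_right` (for `J`).
-/

open Set

/-- Choice of the range `[r₁, r₂]` of length ratios, the threshold `θ` and the overlap margin `ε`
from the thickness condition `γ γ' < m m'`. -/
lemma exists_constants {γ γ' m m' : ℝ} (hγ : 0 < γ) (hγ' : 0 < γ') (hm : 0 < m) (hm' : 0 < m')
    (h : γ * γ' < m * m') :
    ∃ θ r₁ r₂ ε : ℝ, γ < r₁ ∧ r₁ < θ * m' ∧ θ < r₂ * m ∧ r₂ * γ' < 1 ∧ 0 < ε ∧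
      ε * (2 + 2 * r₂) < 1 - γ' * r₂ ∧ ε * (2 + 2 * r₂) < r₁ - γ := by
  obtain ⟨θ, h1, h2⟩ : ∃ θ, γ / m' < θ ∧ θ < m / γ' := by
    apply exists_between
    rw [div_lt_div_iff₀ hm' hγ']
    exact h
  obtain ⟨r₁, h3, h4⟩ := exists_between ((div_lt_iff₀ hm').1 h1)
  obtain ⟨r₂, h5, h6⟩ : ∃ r₂, θ / m < r₂ ∧ r₂ < 1 / γ' := by
    apply exists_between
    rw [div_lt_div_iff₀ hm hγ', one_mul]
    exact (lt_div_iff₀ hγ').1 h2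
  have hθ : 0 < θ := (div_pos hγ hm').trans h1
  have hr₂ : 0 < r₂ := (div_pos hθ hm).trans h5
  have h7 := (lt_div_iff₀ hγ').1 h6
  obtain ⟨δ, h8, h9⟩ : ∃ δ, 0 < δ ∧ δ < min (1 - γ' * r₂) (r₁ - γ) := by
    apply exists_between
    apply lt_min <;> linarith
  refine ⟨θ, r₁, r₂, δ / (2 + 2 * r₂), h3, h4, (div_lt_iff₀ hm).1 h5, h7, by positivity, ?_, ?_⟩
  · rw [div_mul_cancel₀ _ (by positivity)]
    exact h9.trans_le (min_le_left _ _)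
  · rw [div_mul_cancel₀ _ (by positivity)]
    exact h9.trans_le (min_le_right _ _)

/-- The candidate recurrent set: pairs `I = [0, a]`, `J = [t, t + b s]` with length ratio
`b s / a` in `[r₁, r₂]`, each of which starts at least `ε (|I| + |J|)` before the other ends. -/
def linkedSet (a b r₁ r₂ ε : ℝ) : Set (ℝ × ℝ) :=
  {z | a * r₁ ≤ b * z.1 ∧ b * z.1 ≤ a * r₂ ∧ z.2 + ε * (a + b * z.1) ≤ a ∧
    ε * (a + b * z.1) ≤ z.2 + b * z.1}

lemma mem_interior_linkedSet {a b r₁ r₂ ε : ℝ} {z : ℝ × ℝ} (h1 : a * r₁ < b * z.1)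
    (h2 : b * z.1 < a * r₂) (h3 : z.2 + ε * (a + b * z.1) < a)
    (h4 : ε * (a + b * z.1) < z.2 + b * z.1) : z ∈ interior (linkedSet a b r₁ r₂ ε) := by
  have hU : IsOpen {z : ℝ × ℝ | a * r₁ < b * z.1 ∧ b * z.1 < a * r₂ ∧
      z.2 + ε * (a + b * z.1) < a ∧ ε * (a + b * z.1) < z.2 + b * z.1} := by
    refine IsOpen.and (isOpen_lt ?_ ?_) (IsOpen.and (isOpen_lt ?_ ?_)
      (IsOpen.and (isOpen_lt ?_ ?_) (isOpen_lt ?_ ?_))) <;> fun_prop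
  refine interior_maximal ?_ hU ⟨h1, h2, h3, h4⟩
  rintro w ⟨k1, k2, k3, k4⟩
  exact ⟨k1.le, k2.le, k3.le, k4.le⟩

lemma isCompact_linkedSet {a b r₁ r₂ ε : ℝ} (ha : 0 < a) (hb : 0 < b) (hr₁ : 0 < r₁)
    (hε : 0 < ε) : IsCompact (linkedSet a b r₁ r₂ ε) := by
  have hC : IsClosed (linkedSet a b r₁ r₂ ε) := by
    refine IsClosed.and (isClosed_le ?_ ?_) (IsClosed.and (isClosed_le ?_ ?_)
      (IsClosed.and (isClosed_le ?_ ?_) (isClosed_le ?_ ?_))) <;> fun_prop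
  have hK : IsCompact (Icc (0 : ℝ) (a * r₂ / b) ×ˢ Icc (-(a * r₂)) a) :=
    isCompact_Icc.prod isCompact_Icc
  refine hK.of_isClosed_subset hC ?_
  rintro ⟨s, t⟩ ⟨h1, h2, h3, h4⟩
  simp only at h1 h2 h3 h4
  have hS : 0 < b * s := (mul_pos ha hr₁).trans_le h1
  have hE : 0 < ε * (a + b * s) := by positivity
  refine ⟨⟨(pos_of_mul_pos_right hS hb.le).le, ?_⟩, ?_, ?_⟩
  · rw [le_div_iff₀ hb]
    linarith
  · simp only
    linarith
  · simp only
    linarith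

/-- If `r ≤ θ`, replacing `I` by one of its children moves a point of `linkedSet` into the
interior. -/
lemma subdivide_left {a b p₀ p₁ m θ r₁ r₂ ε : ℝ} (ha : 0 < a)
    (hp₀ : 1 < p₀) (hp₁ : 1 < p₁) (hm₀ : m ≤ 1 / p₀) (hm₁ : m ≤ 1 / p₁) (hr₁ : 0 < r₁)
    (hr₂ : 0 < r₂) (hθ : θ < r₂ * m) (hε : 0 < ε)
    (hgap : ε * (2 + 2 * r₂) < r₁ - (1 - 1 / p₀ - 1 / p₁))
    {s t : ℝ} (hz : (s, t) ∈ linkedSet a b r₁ r₂ ε) (hs : b * s ≤ a * θ) :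
    (p₀ * s, p₀ * t) ∈ interior (linkedSet a b r₁ r₂ ε) ∨
      (p₁ * s, p₁ * t + a * (1 - p₁)) ∈ interior (linkedSet a b r₁ r₂ ε) := by
  obtain ⟨h1, h2, h3, h4⟩ := hz
  simp only at h1 h2 h3 h4
  have hS : 0 < b * s := (mul_pos ha hr₁).trans_le h1
  have ratio : ∀ p : ℝ, 1 < p → m ≤ 1 / p → a * r₁ < b * (p * s) ∧ b * (p * s) < a * r₂ := by
    intro p hp hmp
    have hp' : 0 < p := by linarith
    constructor
    · nlinarith
    · have k : b * s < a * r₂ * (1 / p) :=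
        calc b * s ≤ a * θ := hs
          _ < a * (r₂ * m) := by gcongr
          _ ≤ a * (r₂ * (1 / p)) := by gcongr
          _ = a * r₂ * (1 / p) := by ring
      rw [mul_one_div, lt_div_iff₀ hp'] at k
      linarith
  obtain ⟨ha₀, hb₀⟩ := ratio p₀ hp₀ hm₀
  obtain ⟨ha₁, hb₁⟩ := ratio p₁ hp₁ hm₁
  have hp₀' : 0 < p₀ := by linarith
  have hp₁' : 0 < p₁ := by linarith
  have e₀ : p₀ * (1 / p₀) = 1 := by field_simp
  have e₁ : p₁ * (1 / p₁) = 1 := by field_simp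
  have l₀ : 1 / p₀ < 1 := by rw [div_lt_one hp₀']; exact hp₀
  have l₁ : 1 / p₁ < 1 := by rw [div_lt_one hp₁']; exact hp₁
  set α₀ := 1 / p₀
  set α₁ := 1 / p₁
  have hεa : 0 < ε * a := by positivity
  by_cases hc : t + ε * (a * α₀ + b * s) < a * α₀
  · left
    refine mem_interior_linkedSet ha₀ hb₀ ?_ ?_
    · have k := mul_lt_mul_of_pos_left hc hp₀'
      calc p₀ * t + ε * (a + b * (p₀ * s))
          = p₀ * (t + ε * (a * α₀ + b * s)) := by linear_combination (-ε * a) * e₀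
        _ < p₀ * (a * α₀) := k
        _ = a := by linear_combination a * e₀
    · calc ε * (a + b * (p₀ * s)) < p₀ * (ε * (a + b * s)) := by nlinarith
        _ ≤ p₀ * (t + b * s) := by gcongr
        _ = p₀ * t + b * (p₀ * s) := by ring
  · right
    -- The left child of `I` fails, so `J` lies too far right; if the right child failed as well,
    -- `J` would essentially fit into the gap of `I`, contradicting `r₁ > γ`.
    have hd : ε * (a * α₁ + b * s) < t - a * (1 - α₁) + b * s := by
      have k1 : ε * (a * (α₀ + α₁) + 2 * (b * s)) ≤ ε * (a * 2 + 2 * (a * r₂)) := by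
        gcongr
        linarith
      have k2 := mul_lt_mul_of_pos_left hgap ha
      nlinarith
    refine mem_interior_linkedSet ha₁ hb₁ ?_ ?_
    · have k : p₁ * (t + ε * (a + b * s)) ≤ p₁ * a := by gcongr
      show p₁ * t + a * (1 - p₁) + ε * (a + b * (p₁ * s)) < a
      nlinarith
    · have k := mul_lt_mul_of_pos_left hd hp₁'
      calc ε * (a + b * (p₁ * s))
          = p₁ * (ε * (a * α₁ + b * s)) := by linear_combination (-ε * a) * e₁
        _ < p₁ * (t - a * (1 - α₁) + b * s) := k
        _ = p₁ * t + a * (1 - p₁) + b * (p₁ * s) := by linear_combination a * e₁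

/-- If `r ≥ θ`, replacing `J` by one of its children moves a point of `linkedSet` into the
interior. -/
lemma subdivide_right {a b q₀ q₁ m' θ r₁ r₂ ε : ℝ} (ha : 0 < a)
    (hq₀ : 1 < q₀) (hq₁ : 1 < q₁) (hm' : 0 < m') (hm₀ : m' ≤ 1 / q₀) (hm₁ : m' ≤ 1 / q₁)
    (hr₁ : 0 < r₁) (hγ' : 0 < 1 - 1 / q₀ - 1 / q₁) (hθ : r₁ < θ * m') (hε : 0 < ε)
    (hgap : ε * (2 + 2 * r₂) < 1 - (1 - 1 / q₀ - 1 / q₁) * r₂)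
    {s t : ℝ} (hz : (s, t) ∈ linkedSet a b r₁ r₂ ε) (hs : a * θ ≤ b * s) :
    (s / q₀, t) ∈ interior (linkedSet a b r₁ r₂ ε) ∨
      (s / q₁, t + b * ((q₁ - 1) / q₁) * s) ∈ interior (linkedSet a b r₁ r₂ ε) := by
  obtain ⟨h1, h2, h3, h4⟩ := hz
  simp only at h1 h2 h3 h4
  have hS : 0 < b * s := (mul_pos ha hr₁).trans_le h1
  have hq₀' : 0 < q₀ := by linarith
  have hq₁' : 0 < q₁ := by linarith
  have c₀ : s / q₀ = s * (1 / q₀) := by ring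
  have c₁ : s / q₁ = s * (1 / q₁) := by ring
  have c₂ : (q₁ - 1) / q₁ = 1 - 1 / q₁ := by field_simp
  have l₀ : 1 / q₀ < 1 := by rw [div_lt_one hq₀']; exact hq₀
  have l₁ : 1 / q₁ < 1 := by rw [div_lt_one hq₁']; exact hq₁
  rw [c₀, c₁, c₂]
  generalize 1 / q₀ = β₀ at *
  generalize 1 / q₁ = β₁ at *
  have ratio : ∀ β : ℝ, β < 1 → m' ≤ β → a * r₁ < b * (s * β) ∧ b * (s * β) < a * r₂ := by
    intro β hβ hmβ
    constructor
    · calc a * r₁ < a * (θ * m') := by gcongr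
        _ = a * θ * m' := by ring
        _ ≤ b * s * β := by gcongr
        _ = b * (s * β) := by ring
    · nlinarith
  obtain ⟨ha₀, hb₀⟩ := ratio β₀ l₀ hm₀
  obtain ⟨ha₁, hb₁⟩ := ratio β₁ l₁ hm₁
  have hεS : 0 < ε * (b * s) := by positivity
  by_cases hc : ε * (a + b * (s * β₀)) < t + b * (s * β₀)
  · left
    refine mem_interior_linkedSet ha₀ hb₀ ?_ hc
    show t + ε * (a + b * (s * β₀)) < a
    nlinarith
  · right
    -- The left child of `J` fails, so `J` lies too far left; if the right child failed as well,
    -- `I` would essentially fit into the gap of `J`, contradicting `r₂ < 1 / γ'`.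
    refine mem_interior_linkedSet ha₁ hb₁ ?_ ?_
    · show t + b * (1 - β₁) * s + ε * (a + b * (s * β₁)) < a
      have k1 : ε * (a * 2 + b * s * (β₀ + β₁)) ≤ ε * (a * 2 + a * r₂ * 2) := by
        gcongr
        · linarith
        · exact hS.le.trans h2
        · linarith
      have k2 := mul_lt_mul_of_pos_left hgap ha
      have k3 := mul_le_mul_of_nonneg_left h2 hγ'.le
      nlinarith
    · show ε * (a + b * (s * β₁)) < t + b * (1 - β₁) * s + b * (s * β₁)
      nlinarith

theorem stmt5 (a b p₀ p₁ q₀ q₁ : ℝ) (ha : 0 < a) (hb : 0 < b)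
    (hp₀ : 1 < p₀) (hp₁ : 1 < p₁) (hq₀ : 1 < q₀) (hq₁ : 1 < q₁)
    (hpsum : 1 / p₀ + 1 / p₁ < 1) (hqsum : 1 / q₀ + 1 / q₁ < 1)
    -- `K` is the affine Cantor set with convex hull `[0,a]` determined by `(p₀, p₁)`:
    (K : Set ℝ) (hKne : K.Nonempty) (hKc : IsCompact K)
    (hK : K = (fun x => x / p₀) '' K ∪ (fun x => x / p₁ + a * (1 - 1 / p₁)) '' K)
    -- `K'` is the affine Cantor set with convex hull `[0,b]` determined by `(q₀, q₁)`:
    (K' : Set ℝ) (hK'ne : K'.Nonempty) (hK'c : IsCompact K')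
    (hK' : K' = (fun x => x / q₀) '' K' ∪ (fun x => x / q₁ + b * (1 - 1 / q₁)) '' K')
    -- `τ(K) · τ(K') > 1`:
    (hτ : 1 < (min (1 / p₀) (1 / p₁) / (1 - 1 / p₀ - 1 / p₁)) *
            (min (1 / q₀) (1 / q₁) / (1 - 1 / q₀ - 1 / q₁))) :
    ∃ R : Set (ℝ × ℝ), R.Nonempty ∧ IsCompact R ∧ R ⊆ Set.Ioi (0 : ℝ) ×ˢ Set.univ ∧
      ∀ z ∈ R, ∃ L : List (ℝ × ℝ → ℝ × ℝ), L ≠ [] ∧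
        (∀ g ∈ L,
          g = (fun w : ℝ × ℝ => (p₀ * w.1, p₀ * w.2)) ∨
          g = (fun w : ℝ × ℝ => (p₁ * w.1, p₁ * w.2 + a * (1 - p₁))) ∨
          g = (fun w : ℝ × ℝ => (w.1 / q₀, w.2)) ∨
          g = (fun w : ℝ × ℝ => (w.1 / q₁, w.2 + b * ((q₁ - 1) / q₁) * w.1))) ∧
        L.foldl (fun w g => g w) z ∈ interior R := by
  have hγ : 0 < 1 - 1 / p₀ - 1 / p₁ := by linarith
  have hγ' : 0 < 1 - 1 / q₀ - 1 / q₁ := by linarith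
  have hm : 0 < min (1 / p₀) (1 / p₁) := by
    apply lt_min <;> apply one_div_pos.2 <;> linarith
  have hm' : 0 < min (1 / q₀) (1 / q₁) := by
    apply lt_min <;> apply one_div_pos.2 <;> linarith
  have hthick : (1 - 1 / p₀ - 1 / p₁) * (1 - 1 / q₀ - 1 / q₁) <
      min (1 / p₀) (1 / p₁) * min (1 / q₀) (1 / q₁) := by
    rwa [div_mul_div_comm, one_lt_div (mul_pos hγ hγ')] at hτ
  obtain ⟨θ, r₁, r₂, ε, h1, h2, h3, h4, hε, h5, h6⟩ := exists_constants hγ hγ' hm hm' hthick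
  have hr₁ : 0 < r₁ := hγ.trans h1
  have hθ : 0 < θ := pos_of_mul_pos_left (hr₁.trans h2) hm'.le
  have hr₂ : 0 < r₂ := pos_of_mul_pos_left (hθ.trans h3) hm.le
  have hm1 : min (1 / p₀) (1 / p₁) < 1 :=
    (min_le_left _ _).trans_lt (by rw [div_lt_one (by linarith)]; exact hp₀)
  have hm1' : min (1 / q₀) (1 / q₁) < 1 :=
    (min_le_left _ _).trans_lt (by rw [div_lt_one (by linarith)]; exact hq₀)
  have hr₁θ : r₁ < θ := by nlinarith
  have hθr₂ : θ < r₂ := by nlinarith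
  refine ⟨linkedSet a b r₁ r₂ ε, ?_, isCompact_linkedSet ha hb hr₁ hε, ?_, ?_⟩
  · -- Ratio exactly `θ`, with `J` as far left as the overlap condition allows.
    refine ⟨(a * θ / b, ε * (a + a * θ) - a * θ), ?_⟩
    have e : b * (a * θ / b) = a * θ := by field_simp
    have hε2 : ε * 2 < 1 := by nlinarith [mul_pos hγ' hr₂, mul_pos hε hr₂]
    have haθ : 0 < a * θ := by positivity
    simp only [linkedSet, mem_ofPred_eq, e]
    refine ⟨by gcongr, by gcongr, ?_, by linarith⟩
    nlinarith
  · rintro ⟨s, t⟩ ⟨k, -⟩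
    exact ⟨pos_of_mul_pos_right ((mul_pos ha hr₁).trans_le k) hb.le, mem_univ _⟩
  · rintro ⟨s, t⟩ hz
    rcases le_total (b * s) (a * θ) with hs | hs
    · rcases subdivide_left ha hp₀ hp₁ (min_le_left _ _) (min_le_right _ _) hr₁ hr₂ h3 hε h6 hz hs
        with h | h
      · exact ⟨[fun w => (p₀ * w.1, p₀ * w.2)], by simp, by simp, h⟩
      · exact ⟨[fun w => (p₁ * w.1, p₁ * w.2 + a * (1 - p₁))], by simp, by simp, h⟩
    · rcases subdivide_right ha hq₀ hq₁ hm' (min_le_left _ _) (min_le_right _ _) hr₁ hγ' h2 hε h5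
        hz hs with h | h
      · exact ⟨[fun w => (w.1 / q₀, w.2)], by simp, by simp, h⟩
      · exact ⟨[fun w => (w.1 / q₁, w.2 + b * ((q₁ - 1) / q₁) * w.1)], by simp, by simp, h⟩
end

section
/- Let a, b > 0 and p₀, p₁, q₀, q₁ > 1 with 1/p₀ + 1/p₁ < 1 and 1/q₀ + 1/q₁ < 1, and let K be the affine Cantor set with two branches and convex hull [0,a] determined by (p₀, p₁), and K′ the one with convex hull [0,b] determined by (q₀, q₁). Set G := a(1 − 1/p₀ − 1/p₁) (the gap length of K) and G′ := b(1 − 1/q₀ − 1/q₁) (the gap length of K′). If τ(K)·τ(K′) > 1, then for every real λ with G/b ≤ λ ≤ a/G′, one has K − λ·K′ = [−λ·b, a]. -/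
open Set

/-!
Rescaled copies `s • K` and `t • K'` of the two Cantor sets are called linked at offset `w` when
`s * G ≤ t * b`, `t * G' ≤ s * a` (neither hull is shorter than the other's gap) and
`w ∈ [-(t * b), s * a]` (the hulls `[0, s * a]` and `w + [0, t * b]` meet). The gap of either copy
is too short to swallow the hull of the other, so replacing one copy by a suitable one of its two
branches keeps the hulls meeting. The inequality `τ(K) τ(K') > 1` guarantees that for at least one
of the two sets the size condition also survives this replacement, whichever branch is chosen.

Iterating, the product `s * t` decays geometrically while `s / t` stays bounded, so the equation
`s * x - t * y = w` is solved up to arbitrarily small error (`approx_solution`). The difference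
set is compact, hence every point of `[-(l * b), a]` is attained. The reverse inclusion only uses
that the Cantor sets lie in their hulls (`attractor_subset_Icc`).
-/

/-- A compact set contained in the union of its two branches lies in the hull `[0, a]`: compare
its extreme points with their preimages. -/
lemma attractor_subset_Icc {a α₀ α₁ : ℝ} (ha : 0 < a) (h₀ : 0 < α₀) (h₀' : α₀ < 1)
    (h₁ : 0 < α₁) (h₁' : α₁ < 1) {K : Set ℝ} (hne : K.Nonempty) (hc : IsCompact K)
    (hK : ∀ x ∈ K, ∃ y ∈ K, x = α₀ * y ∨ x = α₁ * y + a * (1 - α₁)) :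
    K ⊆ Icc 0 a := by
  obtain ⟨m, hm, hmin⟩ := hc.exists_isLeast hne
  obtain ⟨M, hM, hmax⟩ := hc.exists_isGreatest hne
  intro x hx
  constructor
  · refine le_trans ?_ (hmin hx)
    obtain ⟨y, hy, h | h⟩ := hK m hm <;> have := hmin hy <;> nlinarith
  · refine (hmax hx).trans ?_
    obtain ⟨y, hy, h | h⟩ := hK M hM <;> have := hmax hy <;> nlinarith

/-- Approximate solutions of `s * x - t * y = w` for linked copies, where `α` and `β` are lower
bounds for the contraction ratios and `r` is an upper bound. The squared error is measured
relative to `s * t`, which makes it shrink by the factor `r` whichever set is subdivided. -/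
lemma approx_solution {a b α₀ α₁ β₀ β₁ α β r : ℝ} (ha : 0 < a) (hb : 0 < b)
    (hα : 0 < α) (hβ : 0 < β) (hα₀ : α ≤ α₀) (hα₁ : α ≤ α₁) (hβ₀ : β ≤ β₀) (hβ₁ : β ≤ β₁)
    (hr₀ : α₀ ≤ r) (hr₁ : α₁ ≤ r) (hr₂ : β₀ ≤ r) (hr₃ : β₁ ≤ r) (hr : r < 1)
    (hG : 0 < 1 - α₀ - α₁) (hG' : 0 < 1 - β₀ - β₁)
    (hτ : (1 - α₀ - α₁) * (1 - β₀ - β₁) < α * β)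
    {K K' : Set ℝ} (hne : K.Nonempty) (hne' : K'.Nonempty)
    (hKI : K ⊆ Icc 0 a) (hKI' : K' ⊆ Icc 0 b)
    (hK₀ : ∀ x ∈ K, α₀ * x ∈ K) (hK₁ : ∀ x ∈ K, α₁ * x + a * (1 - α₁) ∈ K)
    (hK₀' : ∀ x ∈ K', β₀ * x ∈ K') (hK₁' : ∀ x ∈ K', β₁ * x + b * (1 - β₁) ∈ K') (n : ℕ) :
    ∀ s t w : ℝ, 0 < s → 0 < t → s * (a * (1 - α₀ - α₁)) ≤ t * b →
      t * (b * (1 - β₀ - β₁)) ≤ s * a → -(t * b) ≤ w → w ≤ s * a →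
      ∃ x ∈ K, ∃ y ∈ K', (s * x - t * y - w) ^ 2 ≤
        2 * (a * b / (1 - α₀ - α₁) + a * b / (1 - β₀ - β₁)) * (s * t) * r ^ n := by
  have hr0 : 0 < r := by linarith
  set M := 2 * (a * b / (1 - α₀ - α₁) + a * b / (1 - β₀ - β₁)) with hM
  have hM0 : 0 < M := by positivity
  induction n with
  | zero =>
    intro s t w hs ht h1 h2 h3 h4
    obtain ⟨x, hx⟩ := hne
    obtain ⟨y, hy⟩ := hne'
    refine ⟨x, hx, y, hy, ?_⟩
    obtain ⟨hx0, hxa⟩ := hKI hx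
    obtain ⟨hy0, hyb⟩ := hKI' hy
    have e1 : s * x ≤ s * a := by gcongr
    have e2 : t * y ≤ t * b := by gcongr
    have e3 : 0 ≤ s * x := by positivity
    have e4 : 0 ≤ t * y := by positivity
    have e5 : (s * x - t * y - w) ^ 2 ≤ (s * a + t * b) ^ 2 := by
      apply sq_le_sq'  <;> linarith
    -- Each squared length is controlled by `s * t` through the bounds on the ratio `s / t`.
    have e6 : (s * a) ^ 2 ≤ a * b / (1 - α₀ - α₁) * (s * t) := by
      rw [div_mul_eq_mul_div, le_div_iff₀ hG]
      calc (s * a) ^ 2 * (1 - α₀ - α₁) = (s * a) * (s * (a * (1 - α₀ - α₁))) := by ring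
        _ ≤ (s * a) * (t * b) := by gcongr
        _ = _ := by ring
    have e7 : (t * b) ^ 2 ≤ a * b / (1 - β₀ - β₁) * (s * t) := by
      rw [div_mul_eq_mul_div, le_div_iff₀ hG']
      calc (t * b) ^ 2 * (1 - β₀ - β₁) = (t * b) * (t * (b * (1 - β₀ - β₁))) := by ring
        _ ≤ (t * b) * (s * a) := by gcongr
        _ = _ := by ring
    rw [pow_zero, hM]
    nlinarith [sq_nonneg (s * a - t * b)]
  | succ n ih =>
    intro s t w hs ht h1 h2 h3 h4
    have hα₀p : 0 < α₀ := by linarith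
    have hα₁p : 0 < α₁ := by linarith
    have hβ₀p : 0 < β₀ := by linarith
    have hβ₁p : 0 < β₁ := by linarith
    have hMst : 0 < M * (s * t) * r ^ n := by positivity
    -- One contraction by a ratio `c ≤ r` gains a factor `r`.
    have key : ∀ c e : ℝ, c ≤ r → e ≤ c * (M * (s * t) * r ^ n) →
        e ≤ M * (s * t) * r ^ (n + 1) := by
      intro c e hc he
      calc e ≤ c * (M * (s * t) * r ^ n) := he
        _ ≤ r * (M * (s * t) * r ^ n) := by gcongr
        _ = _ := by ring
    have hsa : 0 < s * a := by positivity
    have htb : 0 < t * b := by positivity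
    by_cases hcase : t * (b * (1 - β₀ - β₁)) ≤ s * α * a
    · -- `K` can be subdivided.
      have hsub : ∀ c, α ≤ c → c ≤ r → (s * c) * (a * (1 - α₀ - α₁)) ≤ t * b ∧
          t * (b * (1 - β₀ - β₁)) ≤ (s * c) * a := by
        intro c hc hcr
        constructor
        · have h : 0 ≤ s * (a * (1 - α₀ - α₁)) := by positivity
          linarith [mul_le_of_le_one_left h (hcr.trans hr.le)]
        · linarith [mul_le_mul_of_nonneg_left hc hsa.le]
      by_cases hw : w ≤ s * α₀ * a
      · obtain ⟨g1, g2⟩ := hsub α₀ hα₀ hr₀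
        obtain ⟨x, hx, y, hy, hxy⟩ := ih (s * α₀) t w (by positivity) ht g1 g2 h3 hw
        refine ⟨_, hK₀ x hx, y, hy, key α₀ _ hr₀ ?_⟩
        linarith
      · obtain ⟨g1, g2⟩ := hsub α₁ hα₁ hr₁
        obtain ⟨x, hx, y, hy, hxy⟩ := ih (s * α₁) t (w - s * (a * (1 - α₁))) (by positivity) ht
          g1 g2 (by linarith) (by linarith)
        refine ⟨_, hK₁ x hx, y, hy, key α₁ _ hr₁ ?_⟩
        linarith
    · -- Otherwise the thickness inequality allows subdividing `K'`.
      have hcase' : s * (a * (1 - α₀ - α₁)) ≤ t * β * b := by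
        by_contra hcon
        push Not at hcase hcon
        have m1 : (s * α * a) * (t * β * b) < (t * (b * (1 - β₀ - β₁))) *
            (s * (a * (1 - α₀ - α₁))) := by gcongr
        have m2 : (s * a) * (t * b) * ((1 - α₀ - α₁) * (1 - β₀ - β₁)) <
            (s * a) * (t * b) * (α * β) := by gcongr
        linarith
      have hsub : ∀ c, β ≤ c → c ≤ r → s * (a * (1 - α₀ - α₁)) ≤ (t * c) * b ∧
          (t * c) * (b * (1 - β₀ - β₁)) ≤ s * a := by
        intro c hc hcr
        constructor
        · linarith [mul_le_mul_of_nonneg_left hc htb.le]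
        · have h : 0 ≤ t * (b * (1 - β₀ - β₁)) := by positivity
          linarith [mul_le_of_le_one_left h (hcr.trans hr.le)]
      by_cases hw : -(t * β₀ * b) ≤ w
      · obtain ⟨g1, g2⟩ := hsub β₀ hβ₀ hr₂
        obtain ⟨x, hx, y, hy, hxy⟩ := ih s (t * β₀) w hs (by positivity) g1 g2 hw h4
        refine ⟨x, hx, _, hK₀' y hy, key β₀ _ hr₂ ?_⟩
        linarith
      · obtain ⟨g1, g2⟩ := hsub β₁ hβ₁ hr₃
        obtain ⟨x, hx, y, hy, hxy⟩ := ih s (t * β₁) (w + t * (b * (1 - β₁))) hs (by positivity)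
          g1 g2 (by linarith) (by linarith)
        refine ⟨x, hx, _, hK₁' y hy, key β₁ _ hr₃ ?_⟩
        linarith

theorem stmt6 (a b p₀ p₁ q₀ q₁ : ℝ) (ha : 0 < a) (hb : 0 < b)
    (hp₀ : 1 < p₀) (hp₁ : 1 < p₁) (hq₀ : 1 < q₀) (hq₁ : 1 < q₁)
    (hpsum : 1 / p₀ + 1 / p₁ < 1) (hqsum : 1 / q₀ + 1 / q₁ < 1)
    -- `K` is the affine Cantor set with convex hull `[0,a]` determined by `(p₀, p₁)`:
    (K : Set ℝ) (hKne : K.Nonempty) (hKc : IsCompact K)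
    (hK : K = (fun x => x / p₀) '' K ∪ (fun x => x / p₁ + a * (1 - 1 / p₁)) '' K)
    -- `K'` is the affine Cantor set with convex hull `[0,b]` determined by `(q₀, q₁)`:
    (K' : Set ℝ) (hK'ne : K'.Nonempty) (hK'c : IsCompact K')
    (hK' : K' = (fun x => x / q₀) '' K' ∪ (fun x => x / q₁ + b * (1 - 1 / q₁)) '' K')
    -- `τ(K) · τ(K') > 1`:
    (hτ : 1 < (min (1 / p₀) (1 / p₁) / (1 - 1 / p₀ - 1 / p₁)) *
            (min (1 / q₀) (1 / q₁) / (1 - 1 / q₀ - 1 / q₁)))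
    (l : ℝ)
    (hl₁ : a * (1 - 1 / p₀ - 1 / p₁) / b ≤ l)
    (hl₂ : l ≤ a / (b * (1 - 1 / q₀ - 1 / q₁))) :
    {z : ℝ | ∃ x ∈ K, ∃ y ∈ K', z = x - l * y} = Set.Icc (-(l * b)) a := by
  have hp₀' : 0 < 1 / p₀ := by positivity
  have hp₁' : 0 < 1 / p₁ := by positivity
  have hq₀' : 0 < 1 / q₀ := by positivity
  have hq₁' : 0 < 1 / q₁ := by positivity
  have hdiv : ∀ x p : ℝ, x / p = x * (1 / p) := fun x p => div_eq_mul_one_div x p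
  rw [funext fun x => hdiv x p₀, funext fun x => congrArg (· + a * (1 - 1 / p₁)) (hdiv x p₁)] at hK
  rw [funext fun x => hdiv x q₀, funext fun x => congrArg (· + b * (1 - 1 / q₁)) (hdiv x q₁)] at hK'
  clear hdiv
  generalize 1 / p₀ = α₀ at *
  generalize 1 / p₁ = α₁ at *
  generalize 1 / q₀ = β₀ at *
  generalize 1 / q₁ = β₁ at *
  have hG : 0 < 1 - α₀ - α₁ := by linarith
  have hG' : 0 < 1 - β₀ - β₁ := by linarith
  have hK₀ : ∀ x ∈ K, α₀ * x ∈ K := by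
    intro x hx
    rw [hK]
    exact Or.inl ⟨x, hx, mul_comm _ _⟩
  have hK₁ : ∀ x ∈ K, α₁ * x + a * (1 - α₁) ∈ K := by
    intro x hx
    rw [hK]
    exact Or.inr ⟨x, hx, by ring⟩
  have hK₀' : ∀ x ∈ K', β₀ * x ∈ K' := by
    intro x hx
    rw [hK']
    exact Or.inl ⟨x, hx, mul_comm _ _⟩
  have hK₁' : ∀ x ∈ K', β₁ * x + b * (1 - β₁) ∈ K' := by
    intro x hx
    rw [hK']
    exact Or.inr ⟨x, hx, by ring⟩
  have hKI : K ⊆ Icc 0 a := by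
    refine attractor_subset_Icc (α₀ := α₀) (α₁ := α₁) ha hp₀' (by linarith) hp₁' (by linarith)
      hKne hKc ?_
    intro x hx
    rw [hK] at hx
    obtain ⟨y, hy, rfl⟩ | ⟨y, hy, rfl⟩ := hx
    · exact ⟨y, hy, Or.inl (mul_comm _ _)⟩
    · exact ⟨y, hy, Or.inr (by ring)⟩
  have hKI' : K' ⊆ Icc 0 b := by
    refine attractor_subset_Icc (α₀ := β₀) (α₁ := β₁) hb hq₀' (by linarith) hq₁' (by linarith)
      hK'ne hK'c ?_
    intro x hx
    rw [hK'] at hx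
    obtain ⟨y, hy, rfl⟩ | ⟨y, hy, rfl⟩ := hx
    · exact ⟨y, hy, Or.inl (mul_comm _ _)⟩
    · exact ⟨y, hy, Or.inr (by ring)⟩
  have hl : 0 < l := lt_of_lt_of_le (by positivity) hl₁
  rw [div_le_iff₀ hb] at hl₁
  rw [le_div_iff₀ (by positivity)] at hl₂
  rw [div_mul_div_comm, one_lt_div (by positivity)] at hτ
  apply Subset.antisymm
  · rintro z ⟨x, hx, y, hy, rfl⟩
    obtain ⟨hx0, hxa⟩ := hKI hx
    obtain ⟨hy0, hyb⟩ := hKI' hy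
    constructor <;> nlinarith
  · rintro z ⟨hz1, hz2⟩
    set r := max (max α₀ α₁) (max β₀ β₁) with hrdef
    have hr₀ : α₀ ≤ r := (le_max_left _ _).trans (le_max_left _ _)
    have hr₁ : α₁ ≤ r := (le_max_right _ _).trans (le_max_left _ _)
    have hr₂ : β₀ ≤ r := (le_max_left _ _).trans (le_max_right _ _)
    have hr₃ : β₁ ≤ r := (le_max_right _ _).trans (le_max_right _ _)
    have hr : r < 1 := max_lt (max_lt (by linarith) (by linarith))
      (max_lt (by linarith) (by linarith))
    have happ := fun n => approx_solution ha hb (lt_min hp₀' hp₁') (lt_min hq₀' hq₁')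
      (min_le_left _ _) (min_le_right _ _) (min_le_left _ _) (min_le_right _ _) hr₀ hr₁ hr₂ hr₃ hr
      hG hG' hτ hKne hK'ne hKI hKI' hK₀ hK₁ hK₀' hK₁' n 1 l z one_pos hl
      (by linarith) (by linarith) hz1 (by linarith)
    -- The squared error attains its minimum on the compact set `K ×ˢ K'`; it must be zero.
    obtain ⟨⟨x, y⟩, ⟨hx, hy⟩, hmin⟩ := (hKc.prod hK'c).exists_isMinOn (hKne.prod hK'ne)
      (f := fun v : ℝ × ℝ => (1 * v.1 - l * v.2 - z) ^ 2) (by fun_prop)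
    have hle : ∀ n : ℕ, (1 * x - l * y - z) ^ 2 ≤
        2 * (a * b / (1 - α₀ - α₁) + a * b / (1 - β₀ - β₁)) * (1 * l) * r ^ n := by
      intro n
      obtain ⟨x', hx', y', hy', h⟩ := happ n
      exact (hmin (show (x', y') ∈ K ×ˢ K' from ⟨hx', hy'⟩)).trans h
    have hlim := (tendsto_pow_atTop_nhds_zero_of_lt_one (by linarith) hr).const_mul
      (2 * (a * b / (1 - α₀ - α₁) + a * b / (1 - β₀ - β₁)) * (1 * l))
    rw [mul_zero] at hlim
    have h0 : (1 * x - l * y - z) ^ 2 ≤ 0 := ge_of_tendsto' hlim hle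
    have h1 : 1 * x - l * y - z = 0 := by
      simpa using le_antisymm h0 (sq_nonneg _)
    exact ⟨x, hx, y, hy, by linarith⟩
end

section
/- Let 0 < α < 1/2 and 0 < β < 1/2, and let C_α, C_β be the corresponding middle Cantor sets. If λ > 1/(1 − 2β), or 0 < λ < 1 − 2α, then C_α − λ·C_β ≠ [−λ, 1]. -/
/-!
The Cantor set `C_a` misses its central gap: `C_a ⊆ [0, a] ∪ [1 - a, 1]`, according to the value of
the digit `ε₀` (`middleCantor_cases`). If `l (1 - 2β) > 1`, the central gap of `l · C_β` is longer
than the hull `[0, 1]` of `C_α`; if `l < 1 - 2α`, the central gap of `C_α` is longer than the hull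
`[0, l]` of `l · C_β`. In either case the centre `(1 - l) / 2` of the interval `[-l, 1]` is not in
the difference set.
-/

open Set MeasureTheory

/-- The digit `ε₀` decides whether a point of `C_a` lies to the left or to the right of the central
gap `(a, 1 - a)`; the remaining digits contribute between `0` and `a`. -/
lemma middleCantor_cases {a x : ℝ} (ha0 : 0 < a) (ha1 : a < 1) (hx : x ∈ middleCantor a) :
    (0 ≤ x ∧ x ≤ a) ∨ (1 - a ≤ x ∧ x ≤ 1) := by
  obtain ⟨ε, rfl⟩ := hx
  have hg : Summable fun k : ℕ => a ^ k := summable_geometric_of_lt_one ha0.le ha1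
  have hnn : ∀ k : ℕ, 0 ≤ (if ε k then a ^ k else 0) := fun k => by split_ifs <;> positivity
  have hle : ∀ k : ℕ, (if ε k then a ^ k else 0) ≤ a ^ k := fun k => by
    split_ifs
    · exact le_rfl
    · positivity
  have hs : Summable fun k : ℕ => (if ε k then a ^ k else 0) := Summable.of_nonneg_of_le hnn hle hg
  have hT0 : 0 ≤ ∑' k : ℕ, (if ε (k + 1) then a ^ (k + 1) else 0) :=
    tsum_nonneg fun k => hnn (k + 1)
  have hT1 : ∑' k : ℕ, (if ε (k + 1) then a ^ (k + 1) else 0) ≤ ∑' k : ℕ, a ^ (k + 1) :=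
    Summable.tsum_le_tsum (fun k => hle (k + 1)) ((summable_nat_add_iff 1).2 hs)
      ((summable_nat_add_iff 1).2 hg)
  have hG : (1 - a) * ∑' k : ℕ, a ^ (k + 1) = a := by
    have h := hg.tsum_eq_zero_add
    rw [tsum_geometric_of_lt_one ha0.le ha1] at h
    have h1 : (1 - a) * (1 - a)⁻¹ = 1 := mul_inv_cancel₀ (by linarith)
    rw [h] at h1
    linarith
  have hpos : 0 ≤ 1 - a := by linarith
  have hlow := mul_nonneg hpos hT0
  have hupp := (mul_le_mul_of_nonneg_left hT1 hpos).trans_eq hG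
  rw [hs.tsum_eq_zero_add, mul_add]
  cases h : ε 0
  · left
    simp only [Bool.false_eq_true, if_false, mul_zero, zero_add]
    exact ⟨hlow, hupp⟩
  · right
    simp only [if_true, pow_zero, mul_one]
    constructor <;> linarith

theorem stmt7 (α β : ℝ) (hα0 : 0 < α) (hα : α < 1 / 2) (hβ0 : 0 < β) (hβ : β < 1 / 2)
    (l : ℝ) (hl : 1 / (1 - 2 * β) < l ∨ (0 < l ∧ l < 1 - 2 * α)) :
    diffSet α β l ≠ Set.Icc (-l) 1 := by
  intro h
  have hl0 : 0 < l := by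
    rcases hl with h1 | h1
    · exact (one_div_pos.2 (by linarith)).trans h1
    · exact h1.1
  have hmem : (1 - l) / 2 ∈ diffSet α β l := by
    rw [h]
    constructor <;> linarith
  obtain ⟨x, hx, y, hy, hz⟩ := hmem
  have hx' := middleCantor_cases hα0 (by linarith) hx
  have hy' := middleCantor_cases hβ0 (by linarith) hy
  have hx01 : 0 ≤ x ∧ x ≤ 1 := by rcases hx' with h | h <;> constructor <;> linarith [h.1, h.2]
  have hy01 : 0 ≤ y ∧ y ≤ 1 := by rcases hy' with h | h <;> constructor <;> linarith [h.1, h.2]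
  rcases hl with h1 | ⟨-, h1⟩
  · rw [div_lt_iff₀ (by linarith)] at h1
    rcases hy' with hy' | hy'
    · have := mul_le_mul_of_nonneg_left hy'.2 hl0.le
      linarith [hx01.1]
    · have := mul_le_mul_of_nonneg_left hy'.1 hl0.le
      linarith [hx01.2]
  · have hly0 := mul_nonneg hl0.le hy01.1
    have hly1 := mul_le_mul_of_nonneg_left hy01.2 hl0.le
    rcases hx' with hx' | hx' <;> linarith [hx'.1, hx'.2]
end

section
/- Let 0 < α < 1/2 and 0 < β < 1/2 with τ(C_α)·τ(C_β) < 1, and set p = 1/α, q = 1/β, s₁ = 1 − 2α, s₀ = 1/(1 − 2β). For every λ with s₁ ≤ λ ≤ s₀: (1) if q·λ ≤ s₀, then C_α − λ·C_β = [−λ, 1] if and only if C_α − (q·λ)·C_β = [−q·λ, 1]; (2) if s₁ ≤ λ/p, then C_α − λ·C_β = [−λ, 1] if and only if C_α − (λ/p)·C_β = [−λ/p, 1]. -/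
/-!
Write `D(l) = C_α - l C_β`, a subset of `[-l, 1]` that is symmetric under `z ↦ 1 - l - z`.

Splitting `C_β = β C_β ∪ (β C_β + (1 - β))` gives, for `l = β m`,
`D(m) = D(l) ∪ (D(l) - (m - l))`.
If `D(l) = [-l, 1]`, the two pieces are intervals that overlap exactly when `m ≤ 1 / (1 - 2β)`, so
`D(m) = [-m, 1]`.  Conversely, if `D(m) = [-m, 1]`, every `z ∈ [-l, 1]` with `z > 1 - m + l` lies
beyond the second piece and hence in `D(l)`.  The thickness condition together with `1 - 2α ≤ l`
gives `2m > 1 + 3l`, so each of the remaining `z` is reflected by `z ↦ 1 - l - z` into that range.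
This is `diffSet_full_iff`, the first claim.

The second claim is the first one with `α` and `β` exchanged, because
`C_α - l C_β = -l (C_β - l⁻¹ C_α)` (`diffSet_full_swap`).
-/

open Set MeasureTheory

lemma cantor_summable {a : ℝ} (h0 : 0 < a) (h1 : a < 1 / 2) (ε : ℕ → Bool) :
    Summable fun k : ℕ => if ε k then a ^ k else 0 := by
  refine Summable.of_nonneg_of_le (fun k => ?_) (fun k => ?_)
    (summable_geometric_of_lt_one h0.le (by linarith))
  · split_ifs <;> positivity
  · split_ifs
    · exact le_rfl
    · positivity

lemma cantor_symm {a x : ℝ} (h0 : 0 < a) (h1 : a < 1 / 2) (hx : x ∈ middleCantor a) :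
    1 - x ∈ middleCantor a := by
  obtain ⟨ε, rfl⟩ := hx
  refine ⟨fun k => !ε k, ?_⟩
  have hadd := (cantor_summable h0 h1 ε).tsum_add (cantor_summable h0 h1 fun k => !ε k)
  have hgeo : ∑' k : ℕ, ((if ε k then a ^ k else 0) + (if (!ε k) = true then a ^ k else 0))
      = (1 - a)⁻¹ := by
    rw [← tsum_geometric_of_lt_one h0.le (by linarith)]
    refine tsum_congr fun k => ?_
    cases ε k <;> simp
  rw [hgeo] at hadd
  have hinv : (1 - a) * (1 - a)⁻¹ = 1 := mul_inv_cancel₀ (by linarith)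
  rw [hadd] at hinv
  linarith

lemma cantor_nonneg {a x : ℝ} (h0 : 0 < a) (h1 : a < 1 / 2) (hx : x ∈ middleCantor a) :
    0 ≤ x := by
  obtain ⟨ε, rfl⟩ := hx
  refine mul_nonneg (by linarith) (tsum_nonneg fun k => ?_)
  split_ifs <;> positivity

lemma cantor_le_one {a x : ℝ} (h0 : 0 < a) (h1 : a < 1 / 2) (hx : x ∈ middleCantor a) :
    x ≤ 1 := by
  linarith [cantor_nonneg h0 h1 (cantor_symm h0 h1 hx)]

/-- The first digit of an expansion splits off, the others being the expansion of a point of the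
Cantor set scaled by `a`. -/
lemma cantor_digit {a : ℝ} (h0 : 0 < a) (h1 : a < 1 / 2) (ε : ℕ → Bool) :
    (1 - a) * ∑' k : ℕ, (if ε k then a ^ k else 0)
      = a * ((1 - a) * ∑' k : ℕ, (if ε (k + 1) then a ^ k else 0))
        + (if ε 0 then 1 - a else 0) := by
  rw [(cantor_summable h0 h1 ε).tsum_eq_zero_add]
  have hshift : ∑' k : ℕ, (if ε (k + 1) then a ^ (k + 1) else 0)
      = a * ∑' k : ℕ, (if ε (k + 1) then a ^ k else 0) := by
    rw [← tsum_mul_left]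
    refine tsum_congr fun k => ?_
    split_ifs
    · ring
    · simp
  rw [hshift]
  split_ifs <;> simp <;> ring

lemma cantor_split {a x : ℝ} (h0 : 0 < a) (h1 : a < 1 / 2) :
    x ∈ middleCantor a ↔ ∃ y ∈ middleCantor a, x = a * y ∨ x = a * y + (1 - a) := by
  constructor
  · rintro ⟨ε, rfl⟩
    refine ⟨_, ⟨fun k => ε (k + 1), rfl⟩, ?_⟩
    rw [cantor_digit h0 h1 ε]
    cases ε 0 <;> simp
  · rintro ⟨_, ⟨ε, rfl⟩, h | h⟩
    · refine ⟨fun k => Nat.casesOn k false ε, ?_⟩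
      rw [cantor_digit h0 h1, h]
      simp
    · refine ⟨fun k => Nat.casesOn k true ε, ?_⟩
      rw [cantor_digit h0 h1, h]
      simp

lemma diffSet_subset {a b l : ℝ} (ha0 : 0 < a) (ha : a < 1 / 2) (hb0 : 0 < b) (hb : b < 1 / 2)
    (hl : 0 < l) : diffSet a b l ⊆ Set.Icc (-l) 1 := by
  rintro _ ⟨x, hx, y, hy, rfl⟩
  have hx0 := cantor_nonneg ha0 ha hx
  have hx1 := cantor_le_one ha0 ha hx
  have hy0 := cantor_nonneg hb0 hb hy
  have hy1 := cantor_le_one hb0 hb hy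
  constructor <;> nlinarith

lemma diffSet_symm {a b l z : ℝ} (ha0 : 0 < a) (ha : a < 1 / 2) (hb0 : 0 < b) (hb : b < 1 / 2)
    (hz : z ∈ diffSet a b l) : 1 - l - z ∈ diffSet a b l := by
  obtain ⟨x, hx, y, hy, rfl⟩ := hz
  exact ⟨_, cantor_symm ha0 ha hx, _, cantor_symm hb0 hb hy, by ring⟩

/-- `D(m) = D(b m) ∪ (D(b m) - (m - b m))`. -/
lemma diffSet_split {a b m z : ℝ} (hb0 : 0 < b) (hb : b < 1 / 2) :
    z ∈ diffSet a b m ↔ z ∈ diffSet a b (b * m) ∨ z + (m - b * m) ∈ diffSet a b (b * m) := by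
  constructor
  · rintro ⟨x, hx, y, hy, rfl⟩
    obtain ⟨w, hw, rfl | rfl⟩ := (cantor_split hb0 hb).1 hy
    · exact Or.inl ⟨x, hx, w, hw, by ring⟩
    · exact Or.inr ⟨x, hx, w, hw, by ring⟩
  · rintro (⟨x, hx, w, hw, h⟩ | ⟨x, hx, w, hw, h⟩)
    · exact ⟨x, hx, b * w, (cantor_split hb0 hb).2 ⟨w, hw, Or.inl rfl⟩, by linarith⟩
    · exact ⟨x, hx, b * w + (1 - b), (cantor_split hb0 hb).2 ⟨w, hw, Or.inr rfl⟩, by linarith⟩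

/-- Renormalization by the contraction ratio of the second Cantor set. -/
lemma diffSet_full_iff {a b m : ℝ} (ha0 : 0 < a) (ha : a < 1 / 2) (hb0 : 0 < b) (hb : b < 1 / 2)
    (hτ : a * b < (1 - 2 * a) * (1 - 2 * b)) (hl : 1 - 2 * a ≤ b * m)
    (hm : m * (1 - 2 * b) ≤ 1) :
    diffSet a b (b * m) = Set.Icc (-(b * m)) 1 ↔ diffSet a b m = Set.Icc (-m) 1 := by
  have hl0 : 0 < b * m := by linarith
  have hm0 : 0 < m := pos_of_mul_pos_right hl0 hb0.le
  constructor
  · intro h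
    refine (diffSet_subset ha0 ha hb0 hb hm0).antisymm fun z hz => ?_
    rw [diffSet_split hb0 hb, h]
    rcases le_total (-(b * m)) z with hz' | hz'
    · exact Or.inl ⟨hz', hz.2⟩
    · exact Or.inr ⟨by linarith [hz.1], by linarith⟩
  · intro h
    -- The thickness condition is equivalent to `b < (1 - 2 * a) * (2 - 3 * b)`.
    have hgap : 1 + 3 * (b * m) < 2 * m := by
      have h1 : b < b * m * (2 - 3 * b) := by nlinarith
      have h2 : b * 1 < b * (m * (2 - 3 * b)) := by linarith
      linarith [lt_of_mul_lt_mul_left h2 hb0.le]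
    have hright : ∀ z, 1 - m + b * m < z → -(b * m) ≤ z → z ≤ 1 → z ∈ diffSet a b (b * m) := by
      intro z hz hz0 hz1
      have hmem : z ∈ diffSet a b m := by
        rw [h]
        exact ⟨by nlinarith, hz1⟩
      rcases (diffSet_split hb0 hb).1 hmem with h' | h'
      · exact h'
      · linarith [(diffSet_subset ha0 ha hb0 hb hl0 h').2]
    refine (diffSet_subset ha0 ha hb0 hb hl0).antisymm fun z hz => ?_
    obtain ⟨hz0, hz1⟩ := hz
    rcases lt_or_ge (1 - m + b * m) z with hz' | hz'
    · exact hright z hz' hz0 hz1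
    · have hrefl := diffSet_symm ha0 ha hb0 hb
        (hright (1 - b * m - z) (by linarith) (by linarith) (by linarith))
      rwa [sub_sub_cancel] at hrefl

lemma diffSet_full_swap_imp {a b l : ℝ} (ha0 : 0 < a) (ha : a < 1 / 2) (hb0 : 0 < b)
    (hb : b < 1 / 2) (hl : 0 < l) (h : diffSet a b l = Set.Icc (-l) 1) :
    diffSet b a l⁻¹ = Set.Icc (-l⁻¹) 1 := by
  refine (diffSet_subset hb0 hb ha0 ha (inv_pos.2 hl)).antisymm fun z hz => ?_
  have hinv : l * l⁻¹ = 1 := mul_inv_cancel₀ hl.ne'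
  have hmem : -l * z ∈ diffSet a b l := by
    rw [h]
    constructor <;> nlinarith [hz.1, hz.2]
  obtain ⟨x, hx, y, hy, hxy⟩ := hmem
  refine ⟨y, hy, x, hx, ?_⟩
  have : x = l * y - l * z := by linarith
  rw [this]
  field_simp
  ring

/-- Exchanging the two Cantor sets inverts the parameter, because
`C_a - l C_b = -l (C_b - l⁻¹ C_a)`. -/
lemma diffSet_full_swap {a b l : ℝ} (ha0 : 0 < a) (ha : a < 1 / 2) (hb0 : 0 < b)
    (hb : b < 1 / 2) (hl : 0 < l) :
    diffSet a b l = Set.Icc (-l) 1 ↔ diffSet b a l⁻¹ = Set.Icc (-l⁻¹) 1 := by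
  refine ⟨diffSet_full_swap_imp ha0 ha hb0 hb hl, fun h => ?_⟩
  simpa using diffSet_full_swap_imp hb0 hb ha0 ha (inv_pos.2 hl) h

theorem stmt11 (α β : ℝ) (hα0 : 0 < α) (hα : α < 1 / 2) (hβ0 : 0 < β) (hβ : β < 1 / 2)
    (hτ : (α / (1 - 2 * α)) * (β / (1 - 2 * β)) < 1)
    (p q s₁ s₀ : ℝ) (hp : p = 1 / α) (hq : q = 1 / β)
    (hs₁ : s₁ = 1 - 2 * α) (hs₀ : s₀ = 1 / (1 - 2 * β))
    (l : ℝ) (hl₁ : s₁ ≤ l) (hl₂ : l ≤ s₀) :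
    (q * l ≤ s₀ →
      (diffSet α β l = Set.Icc (-l) 1 ↔
        diffSet α β (q * l) = Set.Icc (-(q * l)) 1)) ∧
    (s₁ ≤ l / p →
      (diffSet α β l = Set.Icc (-l) 1 ↔
        diffSet α β (l / p) = Set.Icc (-(l / p)) 1)) := by
  subst hp hq hs₁ hs₀
  have hA : 0 < 1 - 2 * α := by linarith
  have hB : 0 < 1 - 2 * β := by linarith
  have hl0 : 0 < l := by linarith
  have hτ' : α * β < (1 - 2 * α) * (1 - 2 * β) := by
    rwa [div_mul_div_comm, div_lt_one (mul_pos hA hB)] at hτ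
  constructor
  · intro h
    have hm : β * (1 / β * l) = l := by field_simp
    have key := diffSet_full_iff (m := 1 / β * l) hα0 hα hβ0 hβ hτ' (by rw [hm]; exact hl₁)
      ((le_div_iff₀ hB).1 h)
    rwa [hm] at key
  · intro h
    have hn : l / (1 / α) = α * l := by field_simp
    rw [hn] at h ⊢
    have hn0 : 0 < α * l := mul_pos hα0 hl0
    have hm : α * (α * l)⁻¹ = l⁻¹ := by field_simp
    have key := diffSet_full_iff (m := (α * l)⁻¹) hβ0 hβ hα0 hα (by linarith)
      (by
        rw [hm, ← one_div, le_div_iff₀ hl0]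
        linarith [(le_div_iff₀ hB).1 hl₂])
      (by
        rw [inv_mul_le_iff₀ hn0]
        linarith)
    rw [hm] at key
    rw [diffSet_full_swap hα0 hα hβ0 hβ hl0, diffSet_full_swap hα0 hα hβ0 hβ hn0]
    exact key
end

section
/- Let 0 < α < 1/2 and 0 < β < 1/2 with τ(C_α)·τ(C_β) < 1. If log α / log β is irrational, then C_α + C_β ≠ [0, 2]. -/
open Set MeasureTheory

/-- The arithmetic sum `C_a + C_b`. -/
noncomputable def sumSet (a b : ℝ) : Set ℝ :=
  {z : ℝ | ∃ x ∈ middleCantor a, ∃ y ∈ middleCantor b, z = x + y}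

/-- `C_a` misses each of the gaps `(a ^ (k + 1), a ^ k (1 - a))`: the alternatives are that the
digits `ε_0, …, ε_k` all vanish, or that one of them does not. -/
lemma middleCantor_gap {a x : ℝ} (h0 : 0 < a) (h1 : a < 1) (hx : x ∈ middleCantor a) (k : ℕ) :
    x ≤ a ^ (k + 1) ∨ a ^ k * (1 - a) ≤ x := by
  obtain ⟨ε, rfl⟩ := hx
  have hg : Summable (fun j : ℕ => a ^ j) := summable_geometric_of_lt_one h0.le h1
  have hnn : ∀ j, 0 ≤ (if ε j then a ^ j else 0) := fun j => by split_ifs <;> positivity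
  have hle : ∀ j, (if ε j then a ^ j else 0) ≤ a ^ j := fun j => by
    split_ifs
    · exact le_rfl
    · positivity
  have hs : Summable (fun j : ℕ => if ε j then a ^ j else 0) :=
    Summable.of_nonneg_of_le hnn hle hg
  have h1a : 0 < 1 - a := by linarith
  by_cases h : ∀ j < k + 1, ε j = false
  · left
    have hzero : ∑ j ∈ Finset.range (k + 1), (if ε j then a ^ j else 0) = 0 :=
      Finset.sum_eq_zero fun j hj => by simp [h j (Finset.mem_range.1 hj)]
    have hsplit := hs.sum_add_tsum_nat_add (k + 1)
    have hgs : Summable (fun j : ℕ => a ^ (j + (k + 1))) :=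
      (summable_nat_add_iff (f := fun j : ℕ => a ^ j) (k + 1)).2 hg
    have htail : ∑' j, (if ε (j + (k + 1)) then a ^ (j + (k + 1)) else 0)
        ≤ ∑' j, a ^ (j + (k + 1)) :=
      Summable.tsum_le_tsum (fun j => hle _)
        (Summable.of_nonneg_of_le (fun j => hnn _) (fun j => hle _) hgs) hgs
    have hgeo : ∑' j, a ^ (j + (k + 1)) = (1 - a)⁻¹ * a ^ (k + 1) := by
      simp_rw [pow_add a _ (k + 1)]
      rw [tsum_mul_right, tsum_geometric_of_lt_one h0.le h1]
    rw [← hsplit, hzero, zero_add]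
    calc _ ≤ (1 - a) * ((1 - a)⁻¹ * a ^ (k + 1)) :=
          mul_le_mul_of_nonneg_left (htail.trans hgeo.le) h1a.le
      _ = a ^ (k + 1) := by field_simp
  · right
    push Not at h
    obtain ⟨j, hj, hεj⟩ := h
    have hj' : ε j = true := by simpa using hεj
    have hterm := hs.le_tsum j (fun i _ => hnn i)
    simp only [hj', if_true] at hterm
    have hpow : a ^ k ≤ a ^ j := pow_le_pow_of_le_one h0.le h1.le (by omega)
    rw [mul_comm]
    exact mul_le_mul_of_nonneg_left (hpow.trans hterm) h1a.le

lemma middleCantor_nonneg {a x : ℝ} (h0 : 0 < a) (h1 : a < 1) (hx : x ∈ middleCantor a) :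
    0 ≤ x := by
  obtain ⟨ε, rfl⟩ := hx
  exact mul_nonneg (by linarith) (tsum_nonneg fun j => by split_ifs <;> positivity)

/-- A progression with step `0 < g < s - r` starting at `c ≤ r` meets `(r, s)`. -/
lemma exists_nat_step {c g r s : ℝ} (hc : c ≤ r) (hg : 0 < g) (hgs : g < s - r) :
    ∃ j : ℕ, c + j * g ∈ Ioo r s := by
  refine ⟨⌊(r - c) / g⌋₊ + 1, ?_, ?_⟩
  · have := Nat.lt_floor_add_one ((r - c) / g)
    rw [div_lt_iff₀ hg] at this
    push_cast
    linarith
  · have := Nat.floor_le (div_nonneg (sub_nonneg.2 hc) hg.le)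
    rw [le_div_iff₀ hg] at this
    push_cast
    linarith

/-- For `u, v > 0` with irrational ratio, the combinations `n u - m v` with natural coefficients
meet every interval of positive numbers. -/
lemma exists_nat_comb_mem_Ioo {u v r s : ℝ} (hu : 0 < u) (hv : 0 < v)
    (hirr : Irrational (u / v)) (hr : 0 < r) (hrs : r < s) :
    ∃ n m : ℕ, (n : ℝ) * u - m * v ∈ Ioo r s := by
  have hd := dense_addSubgroupClosure_pair_iff.2 hirr
  have hpos : 0 < min (min u v) (s - r) := by
    simp only [lt_min_iff]
    exact ⟨⟨hu, hv⟩, by linarith⟩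
  obtain ⟨g, hgmem, hg0, hg1⟩ := hd.exists_between hpos
  obtain ⟨p, q, hpq⟩ := AddSubgroup.mem_closure_pair.1 hgmem
  simp only [zsmul_eq_mul] at hpq
  simp only [lt_min_iff] at hg1
  obtain ⟨⟨hgu, hgv⟩, hgs⟩ := hg1
  -- As `g` is smaller than `u` and `v`, the coefficients `p` and `-q` have the same sign.
  rcases le_or_gt q 0 with hq | hq
  · have hqv : (q : ℝ) * v ≤ 0 := mul_nonpos_of_nonpos_of_nonneg (by exact_mod_cast hq) hv.le
    have hp : 0 ≤ p := by
      by_contra hp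
      have : (p : ℝ) * u < 0 := mul_neg_of_neg_of_pos (by exact_mod_cast not_le.1 hp) hu
      linarith
    lift p to ℕ using hp
    obtain ⟨q', rfl⟩ : ∃ q' : ℕ, q = -(q' : ℤ) := ⟨(-q).toNat, by omega⟩
    obtain ⟨j, hj⟩ := exists_nat_step hr.le hg0 hgs
    refine ⟨j * p, j * q', ?_⟩
    convert hj using 1
    rw [← hpq]
    push_cast
    ring
  · have hqv : v ≤ (q : ℝ) * v := le_mul_of_one_le_left hv.le (by exact_mod_cast hq)
    have hp : p ≤ 0 := by
      by_contra hp
      have : 0 < (p : ℝ) * u := mul_pos (by exact_mod_cast not_le.1 hp) hu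
      linarith
    lift q to ℕ using hq.le
    obtain ⟨p', rfl⟩ : ∃ p' : ℕ, p = -(p' : ℤ) := ⟨(-p).toNat, by omega⟩
    -- Here `-g` has natural coefficients: descend from a large multiple of `u` in steps of `g`.
    obtain ⟨N, hN⟩ := exists_nat_ge (s / u)
    rw [div_le_iff₀ hu] at hN
    obtain ⟨j, hj⟩ := exists_nat_step (c := -(N * u)) (r := -s) (s := -r) (by linarith) hg0
      (by linarith)
    refine ⟨N + j * p', j * q, ?_⟩
    have hval : ((N + j * p' : ℕ) : ℝ) * u - (j * q : ℕ) * v = -(-(N * u) + j * g) := by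
      rw [← hpq]
      push_cast
      ring
    rw [hval]
    exact ⟨by linarith [hj.2], by linarith [hj.1]⟩

theorem stmt12 (α β : ℝ) (hα0 : 0 < α) (hα : α < 1 / 2) (hβ0 : 0 < β) (hβ : β < 1 / 2)
    (hτ : (α / (1 - 2 * α)) * (β / (1 - 2 * β)) < 1)
    (hirr : Irrational (Real.log α / Real.log β)) :
    sumSet α β ≠ Set.Icc 0 2 := by
  intro hsum
  have hα2 : 0 < 1 - 2 * α := by linarith
  have hβ2 : 0 < 1 - 2 * β := by linarith
  have hkey : α * β < (1 - 2 * α) * (1 - 2 * β) := by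
    rw [div_mul_div_comm, div_lt_one (mul_pos hα2 hβ2)] at hτ
    exact hτ
  have hp1 : 1 < 1 / (1 - 2 * β) := by
    rw [lt_div_iff₀ hβ2]
    linarith
  have hwin : 1 / (1 - 2 * β) < (2 - 3 * α) / α := by
    rw [div_lt_div_iff₀ hβ2 hα0]
    nlinarith
  have hlogα : Real.log α < 0 := Real.log_neg hα0 (by linarith)
  have hlogβ : Real.log β < 0 := Real.log_neg hβ0 (by linarith)
  obtain ⟨n, m, h1, h2⟩ := exists_nat_comb_mem_Ioo (u := -Real.log α) (v := -Real.log β)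
    (neg_pos.2 hlogα) (neg_pos.2 hlogβ) (by rwa [neg_div_neg_eq]) (Real.log_pos hp1)
    (Real.log_lt_log (by linarith) hwin)
  have hA : 0 < α ^ n := by positivity
  have hB : 0 < β ^ m := by positivity
  have hlog : (n : ℝ) * -Real.log α - m * -Real.log β = Real.log (β ^ m / α ^ n) := by
    rw [Real.log_div hB.ne' hA.ne', Real.log_pow, Real.log_pow]
    ring
  rw [hlog] at h1 h2
  have h1' := (Real.log_lt_log_iff (by linarith) (by positivity)).1 h1
  have h2' := (Real.log_lt_log_iff (by positivity) (by linarith)).1 h2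
  have hn : n ≠ 0 := by
    rintro rfl
    have : β ^ m ≤ 1 := pow_le_one₀ hβ0.le (by linarith)
    rw [pow_zero, div_one] at h1'
    linarith
  obtain ⟨k, rfl⟩ := Nat.exists_eq_succ_of_ne_zero hn
  rw [div_lt_div_iff₀ hβ2 hA] at h1'
  rw [div_lt_div_iff₀ hA hα0] at h2'
  have hA1 : α ^ (k + 1) ≤ 1 := pow_le_one₀ hα0.le (by linarith)
  have hB1 : β ^ m ≤ 1 := pow_le_one₀ hβ0.le (by linarith)
  have hz : (α ^ (k + 1) + β ^ m) / 2 ∈ sumSet α β := by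
    rw [hsum]
    exact ⟨by positivity, by linarith⟩
  obtain ⟨x, hx, y, hy, hxy⟩ := hz
  have hx0 := middleCantor_nonneg hα0 (by linarith) hx
  have hy0 := middleCantor_nonneg hβ0 (by linarith) hy
  have hxle : x ≤ α ^ (k + 1) := by
    refine (middleCantor_gap hα0 (by linarith) hx k).resolve_right fun h => ?_
    have hk : 0 < α ^ k := by positivity
    have h3 : β ^ m < (2 - 3 * α) * α ^ k := by
      rw [Nat.succ_eq_add_one, pow_succ, ← mul_assoc] at h2'
      exact lt_of_mul_lt_mul_right h2' hα0.le
    rw [pow_succ] at hxy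
    nlinarith
  have hyle : y ≤ β ^ (m + 1) := by
    refine (middleCantor_gap hβ0 (by linarith) hy m).resolve_right fun h => ?_
    simp only [Nat.succ_eq_add_one] at h1'
    nlinarith
  rw [pow_succ] at hyle
  simp only [Nat.succ_eq_add_one] at h1'
  nlinarith
end
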